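/- arXiv:2002.00465 — 7 statements merged into one kernel-verified Lean document; each statement's English description precedes it below -/
import Mathlib

section
/- For all real x > 1 and δ ∈ ℝ with x+δ > 1: Γ(x+δ)/Γ(x) > e^{-δ}·(1+δ/x)^{x+δ-ξ}·x^{1/2+δ-ξ}, where ξ is the Euler–Mascheroni constant. -/
open Real MeasureTheory Set Filter

/-- Normalizing factor `δ'_n(β,γ)` for the orthonormal Jacobi polynomials. -/
noncomputable def jacobiDelta (β γ : ℝ) (n : ℕ) : ℝ :=
  Real.sqrt ((β + γ + 2 * n + 1) * Real.Gamma (β + γ + n + 1) /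
    (n.factorial * Real.Gamma (β + n + 1) * Real.Gamma (γ + n + 1)))

/-- The orthonormal Jacobi polynomial `p_n^{(β,γ)}` on `(a,b)`. -/
noncomputable def jacobiP (a b β γ : ℝ) (n : ℕ) (x : ℝ) : ℝ :=
  (-1 : ℝ) ^ n * (b - a) ^ (-(n : ℝ) - (β + γ + 1) / 2) * jacobiDelta β γ n *
    (x - a) ^ (-β) * (b - x) ^ (-γ) *
    iteratedDeriv n (fun t : ℝ => (t - a) ^ (β + n) * (b - t) ^ (γ + n)) x

/-- Generalized binomial coefficient `binom(x, j) = Γ(x+1)/(j!·Γ(x-j+1))`. -/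
noncomputable def genBinom (x : ℝ) (j : ℕ) : ℝ :=
  Real.Gamma (x + 1) / (j.factorial * Real.Gamma (x - j + 1))

/-- The coefficient `C̃_n^k(β,γ)`. -/
noncomputable def Ctilde (β γ : ℝ) (n k : ℕ) : ℝ :=
  ∑ i ∈ Finset.range (k + 1),
    (n.choose i : ℝ) * genBinom ((n : ℝ) + β) (n - i) * genBinom ((n : ℝ) + γ) i *
      (k.choose i : ℝ) * genBinom ((n : ℝ) - i) (k - i) * (i.factorial : ℝ)

/-- The Euler Beta function `B(x,y) = Γ(x)Γ(y)/Γ(x+y)`. -/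
noncomputable def betaB (x y : ℝ) : ℝ := Real.Gamma x * Real.Gamma y / Real.Gamma (x + y)

/-- The matrix coefficients `A^{α,β,γ}_{mn}`. -/
noncomputable def Acoef (α β γ : ℝ) (m n : ℕ) : ℝ :=
  jacobiDelta β γ m * jacobiDelta β γ n *
    ∑ k ∈ Finset.range (n + 1),
      (-1 : ℝ) ^ k * Ctilde β γ n k * betaB (α + β + k + 1) (γ + m + 1) /
        Real.Gamma ((k : ℝ) + α - m + 1)

/-- The coefficient `c_n = δ'_n·n!·Γ(n+β+1)·Γ(n+γ+1)/4^n`. -/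
noncomputable def cCoef (β γ : ℝ) (n : ℕ) : ℝ :=
  jacobiDelta β γ n * n.factorial * Real.Gamma (n + β + 1) * Real.Gamma (n + γ + 1) / 4 ^ n

/-- The weighted `L_p` norm `‖f‖_{L_p(I,ω)}` with `ω(x) = (x-a)^β (b-x)^γ`, `I = (a,b)`. -/
noncomputable def wnorm (a b β γ p : ℝ) (f : ℝ → ℝ) : ℝ :=
  (∫ x in Set.Ioo a b, |f x| ^ p * ((x - a) ^ β * (b - x) ^ γ)) ^ (1 / p)

/-- Membership in the weighted Lebesgue space `L_p(I,ω)`. -/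
def MemWLp (a b β γ p : ℝ) (f : ℝ → ℝ) : Prop :=
  MeasurableSet (Set.Ioo a b) ∧
    IntegrableOn (fun x : ℝ => |f x| ^ p * ((x - a) ^ β * (b - x) ^ γ)) (Set.Ioo a b)

/-- The right-sided Riemann–Liouville fractional integral `I^μ_{b-}`. -/
noncomputable def fracIntR (b μ : ℝ) (f : ℝ → ℝ) (x : ℝ) : ℝ :=
  (1 / Real.Gamma μ) * ∫ t in Set.Ioo x b, f t * (t - x) ^ (μ - 1)

/-- The left-sided Riemann–Liouville fractional integral `I^μ_{a+}`. -/
noncomputable def fracIntL (a μ : ℝ) (f : ℝ → ℝ) (x : ℝ) : ℝ :=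
  (1 / Real.Gamma μ) * ∫ t in Set.Ioo a x, f t * (x - t) ^ (μ - 1)

/-- The right-sided Riemann–Liouville fractional derivative `D^μ_{b-}`. -/
noncomputable def fracDerR (b μ : ℝ) (f : ℝ → ℝ) (x : ℝ) : ℝ :=
  - deriv (fun y : ℝ => fracIntR b (1 - μ) f y) x

/-- Jacobi coefficients `f_n` of a function `f`. -/
noncomputable def jacobiCoef (a b β γ : ℝ) (f : ℝ → ℝ) (n : ℕ) : ℝ :=
  ∫ x in Set.Ioo a b, f x * jacobiP a b β γ n x * ((x - a) ^ β * (b - x) ^ γ)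

/-- Partial sums `S_k f` of the Jacobi series of `f`. -/
noncomputable def jacobiPartial (a b β γ : ℝ) (f : ℝ → ℝ) (k : ℕ) (x : ℝ) : ℝ :=
  ∑ n ∈ Finset.range (k + 1), jacobiCoef a b β γ f n * jacobiP a b β γ n x

open Asymptotics


namespace Stmt9Aux

lemma cmp {f g f' g' : ℝ → ℝ} {x : ℝ} (hx : 1 ≤ x)
    (hf : ∀ t, 1 ≤ t → t ≤ x → HasDerivAt f (f' t) t)
    (hg : ∀ t, 1 ≤ t → t ≤ x → HasDerivAt g (g' t) t)
    (h : ∀ t, 1 ≤ t → t ≤ x → g' t ≤ f' t) : g x - g 1 ≤ f x - f 1 := by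
  have hd : ∀ t, 1 ≤ t → t ≤ x → HasDerivAt (fun t => f t - g t) (f' t - g' t) t :=
    fun t h1 h2 => (hf t h1 h2).sub (hg t h1 h2)
  have hm : MonotoneOn (fun t => f t - g t) (Set.Icc 1 x) := by
    apply monotoneOn_of_hasDerivWithinAt_nonneg (f' := fun t => f' t - g' t) (convex_Icc 1 x)
    · intro t ht
      exact (hd t ht.1 ht.2).continuousAt.continuousWithinAt
    · intro t ht
      have ht := interior_subset ht
      exact (hd t ht.1 ht.2).hasDerivWithinAt
    · intro t ht
      have ht := interior_subset ht
      exact sub_nonneg.2 (h t ht.1 ht.2)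
  have := hm (Set.left_mem_Icc.2 hx) (Set.right_mem_Icc.2 hx) hx
  linarith

lemma hasDerivAt_seq (n : ℕ) (t : ℝ) (ht : 1 ≤ t) :
    HasDerivAt (fun t => Real.BohrMollerup.logGammaSeq t n)
      (Real.log n - ∑ m ∈ Finset.range (n + 1), 1 / (t + m)) t := by
  unfold Real.BohrMollerup.logGammaSeq
  have h1 : HasDerivAt (fun t : ℝ => ∑ m ∈ Finset.range (n + 1), Real.log (t + m))
      (∑ m ∈ Finset.range (n + 1), 1 / (t + m)) t := by
    apply HasDerivAt.fun_sum
    intro m _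
    have : t + (m : ℝ) ≠ 0 := by positivity
    exact ((hasDerivAt_id t).add_const (m : ℝ)).log this
  have h2 := (((hasDerivAt_id t).mul_const (Real.log n)).add_const (Real.log (n.factorial))).sub h1
  have e : Real.log n - ∑ m ∈ Finset.range (n + 1), 1 / (t + m) =
      1 * Real.log n - ∑ m ∈ Finset.range (n + 1), 1 / (t + m) := by rw [one_mul]
  rw [e]
  exact h2

lemma trap {y : ℝ} (hy : 0 < y) : Real.log (y + 1) - Real.log y < (1 / y + 1 / (y + 1)) / 2 := by
  have hz : 1 < (y + 1) / y := by rw [lt_div_iff₀ hy]; linarith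
  have h := Real.self_lt_sinh_iff.2 (Real.log_pos hz)
  rw [Real.sinh_log (by positivity), Real.log_div (by positivity) (by positivity)] at h
  refine h.trans_eq ?_
  field_simp
  ring

lemma sum_lower (t : ℝ) (ht : 1 ≤ t) (n : ℕ) :
    Real.log (t + 1 + n) - Real.log t + ((1 / t + 1 / (t + 1)) / 2 - (Real.log (t + 1) - Real.log t))
      ≤ (∑ m ∈ Finset.range (n + 2), 1 / (t + m)) - 1 / (2 * t) - 1 / (2 * (t + 1 + n)) := by
  induction n with
  | zero =>
    simp [Finset.sum_range_succ]
    have : t ≠ 0 := by positivity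
    have : t + 1 ≠ 0 := by positivity
    apply le_of_eq
    field_simp
    ring
  | succ n ih =>
    rw [Finset.sum_range_succ]
    have h := trap (y := t + 1 + n) (by positivity)
    push_cast
    have e1 : (1 : ℝ) / (2 * (t + 1 + n)) = 1 / (t + 1 + n) / 2 := by field_simp
    have e2 : (1 : ℝ) / (2 * (t + 1 + (n + 1))) = 1 / (t + 1 + n + 1) / 2 := by
      field_simp; ring
    have e3 : (1 : ℝ) / (t + (n + 1 + 1 - 1 + 1)) = 1 / (t + 1 + n + 1) := by congr 1; ring
    have e4 : t + ((n : ℝ) + 2) = t + 1 + n + 1 := by ring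
    have e5 : t + 1 + ((n : ℝ) + 1) = t + 1 + n + 1 := by ring
    have e6 : ((n + 1 + 1 : ℕ) : ℝ) = n + 2 := by push_cast; ring
    have e7 : t + ((n : ℝ) + 1 + 1) = t + 1 + n + 1 := by ring
    rw [e2, e5]
    rw [e1] at ih
    rw [show t + ((n : ℝ) + 2) = t + 1 + n + 1 by ring]
    linarith

lemma gamma_upper {x : ℝ} (hx : 1 < x) :
    Real.log (Real.Gamma x) < (x - 1 / 2) * Real.log x - x + 1 := by
  have key : ∀ n : ℕ, 
      (((x + 1 / 2) * Real.log x - (x + 1 / 2) * Real.log (x + 1)) -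
        ((1 + 1 / 2) * Real.log 1 - (1 + 1 / 2) * Real.log (1 + 1))) ≤
      ((x - 1 / 2) * Real.log x - x + 1 - Real.BohrMollerup.logGammaSeq x (n + 1)) -
      ((1 - 1 / 2) * Real.log 1 - 1 + 1 - Real.BohrMollerup.logGammaSeq 1 (n + 1)) := by
    intro n
    refine cmp (g := fun x => (x + 1 / 2) * Real.log x - (x + 1 / 2) * Real.log (x + 1))
      (f := fun x => (x - 1 / 2) * Real.log x - x + 1 - Real.BohrMollerup.logGammaSeq x (n + 1))
      (g' := fun t => (1 * Real.log t + (t + 1 / 2) * t⁻¹) -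
        (1 * Real.log (t + 1) + (t + 1 / 2) * (1 / (t + 1))))
      (f' := fun t => (1 * Real.log t + (t - 1 / 2) * t⁻¹) - 1 -
        (Real.log (n + 1 : ℕ) - ∑ m ∈ Finset.range (n + 1 + 1), 1 / (t + m))) hx.le ?_ ?_ ?_
    · intro t h1 _
      have h0 : t ≠ 0 := by positivity
      exact (((((hasDerivAt_id t).sub_const (1 / 2)).mul (Real.hasDerivAt_log h0)).sub
        (hasDerivAt_id t)).add_const 1).sub (hasDerivAt_seq (n + 1) t h1)
    · intro t h1 _
      have h0 : t ≠ 0 := by positivity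
      have h0' : t + 1 ≠ 0 := by positivity
      exact (((hasDerivAt_id t).add_const (1 / 2)).mul (Real.hasDerivAt_log h0)).sub
        (((hasDerivAt_id t).add_const (1 / 2)).mul (((hasDerivAt_id t).add_const 1).log h0'))
    · intro t h1 _
      have hs := sum_lower t h1 n
      have h0 : t ≠ 0 := by positivity
      have h0' : t + 1 ≠ 0 := by positivity
      have hl : Real.log (n + 1 : ℕ) ≤ Real.log (t + 1 + n) := by
        apply Real.log_le_log (by positivity)
        push_cast; linarith
      have hp : (0 : ℝ) ≤ 1 / (2 * (t + 1 + n)) := by positivity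
      have e1 : (t + 1 / 2) * t⁻¹ = 1 + 1 / t / 2 := by field_simp
      have e2 : (t - 1 / 2) * t⁻¹ = 1 - 1 / t / 2 := by field_simp
      have e3 : (t + 1 / 2) * (1 / (t + 1)) = 1 - 1 / (t + 1) / 2 := by field_simp; ring
      have e4 : 1 / (2 * t) = 1 / t / 2 := by field_simp
      simp only [e1, e2, e3]
      rw [e4] at hs
      have : n + 1 + 1 = n + 2 := rfl
      rw [this]
      linarith
  have hlim : ∀ y : ℝ, 0 < y → Tendsto (fun n => Real.BohrMollerup.logGammaSeq y (n + 1)) atTop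
      (nhds (Real.log (Real.Gamma y))) := fun y hy =>
    (Real.BohrMollerup.tendsto_log_gamma hy).comp (tendsto_add_atTop_nat 1)
  have hl := ge_of_tendsto' (((hlim x (by linarith)).const_sub
    ((x - 1 / 2) * Real.log x - x + 1)).sub ((hlim 1 one_pos).const_sub
    ((1 - 1 / 2) * Real.log 1 - 1 + 1))) key
  have hmono : StrictMonoOn (fun x => (x + 1 / 2) * Real.log x - (x + 1 / 2) * Real.log (x + 1))
      (Set.Ici 1) := by
    have hD : ∀ t : ℝ, 1 ≤ t → HasDerivAt
      (fun x => (x + 1 / 2) * Real.log x - (x + 1 / 2) * Real.log (x + 1))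
       ((1 * Real.log t + (t + 1 / 2) * t⁻¹) -
        (1 * Real.log (t + 1) + (t + 1 / 2) * (1 / (t + 1)))) t := by
      intro t h1
      have h0 : t ≠ 0 := by positivity
      have h0' : t + 1 ≠ 0 := by positivity
      exact (((hasDerivAt_id t).add_const (1 / 2)).mul (Real.hasDerivAt_log h0)).sub
        (((hasDerivAt_id t).add_const (1 / 2)).mul (((hasDerivAt_id t).add_const 1).log h0'))
    apply strictMonoOn_of_deriv_pos (convex_Ici 1)
    · intro t ht
      exact (hD t ht).continuousAt.continuousWithinAt
    · intro t ht
      have ht : 1 ≤ t := interior_subset ht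
      rw [(hD t ht).deriv]
      have h0 : t ≠ 0 := by positivity
      have h0' : t + 1 ≠ 0 := by positivity
      have e1 : (t + 1 / 2) * t⁻¹ = 1 + 1 / t / 2 := by field_simp
      have e3 : (t + 1 / 2) * (1 / (t + 1)) = 1 - 1 / (t + 1) / 2 := by field_simp; ring
      rw [e1, e3]
      have := trap (y := t) (by positivity)
      linarith
  have hs := hmono (Set.mem_Ici.2 le_rfl) (Set.mem_Ici.2 hx.le) hx
  simp only at hs
  simp only [Real.Gamma_one, Real.log_one] at hl hs
  linarith

lemma term_bound {y : ℝ} (hy : 2 ≤ y) :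
    1 / y ^ 2 + 1 / (2 * y ^ 4) ≤ 2 * Real.log y - Real.log (y - 1) - Real.log (y + 1) := by
  have h1 : 0 < y - 1 := by linarith
  have h2 : 0 < y + 1 := by linarith
  have h0 : 0 < y := by linarith
  have h := Real.le_log_one_add_of_nonneg (x := 1 / ((y - 1) * (y + 1))) (by positivity)
  have e : 1 + 1 / ((y - 1) * (y + 1)) = y ^ 2 / ((y - 1) * (y + 1)) := by
    field_simp; ring
  rw [e, Real.log_div (by positivity) (by positivity), Real.log_pow,
    Real.log_mul h1.ne' h2.ne'] at h
  have h3 : 0 < 2 * y ^ 2 - 1 := by nlinarith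
  have e2 : 2 * (1 / ((y - 1) * (y + 1))) / (1 / ((y - 1) * (y + 1)) + 2) = 2 / (2 * y ^ 2 - 1) := by
    have : 1 / ((y - 1) * (y + 1)) + 2 = (2 * y ^ 2 - 1) / ((y - 1) * (y + 1)) := by
      field_simp; ring
    rw [this]
    field_simp
  rw [e2] at h
  have h4 : 1 / y ^ 2 + 1 / (2 * y ^ 4) ≤ 2 / (2 * y ^ 2 - 1) := by
    have : 1 / y ^ 2 + 1 / (2 * y ^ 4) = (2 * y ^ 2 + 1) / (2 * y ^ 4) := by
      field_simp
    rw [this, div_le_div_iff₀ (by positivity) h3]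
    nlinarith
  push_cast at h
  linarith

lemma sum_upper (t : ℝ) (ht : 1 ≤ t) (n : ℕ) :
    ∑ m ∈ Finset.range (n + 2), (m : ℝ) / (t + m) ^ 2 ≤
      -Real.log t + (n + 2) * Real.log (t + n + 1) - (n + 1) * Real.log (t + n + 2)
        - 1 / (2 * (t + 1) ^ 4) := by
  induction n with
  | zero =>
    have h := term_bound (y := t + 1) (by linarith)
    have e1 : t + 1 - 1 = t := by ring
    have e2 : t + 1 + 1 = t + 2 := by ring
    rw [e1, e2] at h
    simp [Finset.sum_range_succ] at h ⊢
    linarith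
  | succ n ih =>
    rw [Finset.sum_range_succ]
    have h := term_bound (y := t + n + 2) (by have : (0:ℝ) ≤ n := by positivity
                                              linarith)
    have e1 : t + n + 2 - 1 = t + n + 1 := by ring
    have e2 : t + n + 2 + 1 = t + n + 3 := by ring
    rw [e1, e2] at h
    have hp : 0 ≤ 1 / (2 * (t + n + 2) ^ 4) := by positivity
    have h' : 1 / (t + n + 2) ^ 2 ≤ 2 * Real.log (t + n + 2) - Real.log (t + n + 1)
      - Real.log (t + n + 3) := by linarith
    have h'' := mul_le_mul_of_nonneg_left h' (show (0 : ℝ) ≤ n + 2 by positivity)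
    push_cast
    have e3 : t + ((n : ℝ) + 1 + 1) = t + n + 2 := by ring
    have e4 : t + ((n : ℝ) + 1) + 1 = t + n + 2 := by ring
    have e5 : t + ((n : ℝ) + 1) + 2 = t + n + 3 := by ring
    have e6 : ((n : ℝ) + 1 + 1) / (t + n + 2) ^ 2 = (n + 2) * (1 / (t + n + 2) ^ 2) := by
      field_simp; ring
    have e7 : t + ((n : ℝ) + 2) = t + n + 2 := by ring
    rw [e7, e4, e5, show ((n : ℝ) + 2) / (t + n + 2) ^ 2 = (n + 2) * (1 / (t + n + 2) ^ 2) by ring]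
    linarith

lemma E_lower (t : ℝ) (ht : 1 ≤ t) (n : ℕ) :
    1 / (2 * (t + 1) ^ 4) - (2 * t + 1) / (n + 1) ≤
    Real.log (n + 1 : ℕ) - Real.log t - 1 - ∑ m ∈ Finset.range (n + 2), (m : ℝ) / (t + m) ^ 2 := by
  have hs := sum_upper t ht n
  have hn : (0 : ℝ) < n + 1 := by positivity
  have hA : 0 < t + n + 1 := by positivity
  have hB : 0 < t + n + 2 := by positivity
  have h1 : Real.log (t + n + 1) - Real.log (n + 1 : ℕ) ≤ t / (n + 1) := by
    push_cast
    rw [← Real.log_div hA.ne' hn.ne']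
    refine (Real.log_le_sub_one_of_pos (by positivity)).trans_eq ?_
    field_simp; ring
  have h2 : 1 / (t + n + 2) ≤ Real.log (t + n + 2) - Real.log (t + n + 1) := by
    rw [← Real.log_div hB.ne' hA.ne']
    have := Real.one_sub_inv_le_log_of_pos (show 0 < (t + n + 2) / (t + n + 1) by positivity)
    refine Eq.trans_le ?_ this
    field_simp; ring
  have h3 := mul_le_mul_of_nonneg_left h2 hn.le
  have h4 : 1 - (t + 1) / (n + 1) ≤ ((n : ℝ) + 1) * (1 / (t + n + 2)) := by
    have : ((n : ℝ) + 1) * (1 / (t + n + 2)) = 1 - (t + 1) / (t + n + 2) := by field_simp; ring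
    rw [this]
    have : (t + 1) / (t + n + 2) ≤ (t + 1) / (n + 1) := by
      apply div_le_div_of_nonneg_left (by positivity) hn; linarith
    linarith
  have h5 : (2 * t + 1) / ((n : ℝ) + 1) = t / (n + 1) + (t + 1) / (n + 1) := by
    field_simp; ring
  rw [h5]
  linarith

lemma P_lower {x : ℝ} (c ε G : ℝ) (n : ℕ)
    (hE : ∀ t, 1 ≤ t → t ≤ x → c - ε ≤
      Real.log (n + 1 : ℕ) - Real.log t - 1 - ∑ m ∈ Finset.range (n + 2), (m : ℝ) / (t + m) ^ 2)
    (hx : 1 ≤ x) :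
    (c - ε) * (x - 1) + (Real.log (n + 1 : ℕ) - ∑ m ∈ Finset.range (n + 2), 1 / (1 + (m : ℝ)) + G) ≤
     x * (Real.log (n + 1 : ℕ) - Real.log x) - ∑ m ∈ Finset.range (n + 2), x / (x + m) + G := by
  have := cmp (x := x) (g := fun t => t * (c - ε)) (g' := fun _ => 1 * (c - ε))
    (f := fun x => x * (Real.log (n + 1 : ℕ) - Real.log x) -
      ∑ m ∈ Finset.range (n + 2), x / (x + m))
    (f' := fun t => (1 * (Real.log (n + 1 : ℕ) - Real.log t) + t * (-t⁻¹)) -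
      ∑ m ∈ Finset.range (n + 2), (1 * (t + m) - t * 1) / (t + m) ^ 2) hx ?_ ?_ ?_
  · simp only [Real.log_one] at this
    linarith
  · intro t h1 _
    have h0 : t ≠ 0 := by positivity
    refine HasDerivAt.sub ?_ ?_
    · exact (hasDerivAt_id t).mul ((Real.hasDerivAt_log h0).const_sub _)
    · apply HasDerivAt.fun_sum
      intro m _
      have : t + (m : ℝ) ≠ 0 := by positivity
      exact (hasDerivAt_id t).div ((hasDerivAt_id t).add_const (m : ℝ)) this
  · intro t _ _
    exact (hasDerivAt_id t).mul_const _
  · intro t h1 h2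
    have h0 : t ≠ 0 := by positivity
    have := hE t h1 h2
    have e : t * (-t⁻¹) = -1 := by field_simp
    have e2 : ∀ m : ℕ, 1 * (t + (m : ℝ)) - t * 1 = m := by intro m; ring
    simp only [e, e2]
    linarith

lemma gamma_lower {x : ℝ} (hx : 1 < x) :
    (x - Real.eulerMascheroniConstant) * Real.log x - x + 1 < Real.log (Real.Gamma x) := by
  set G := Real.eulerMascheroniConstant with hG
  set c : ℝ := 1 / (2 * (x + 1) ^ 4) with hc
  have hcpos : 0 < c := by positivity
  set d : ℕ → ℝ := fun n =>
    Real.log (n + 1 : ℕ) - ∑ m ∈ Finset.range (n + 2), 1 / (1 + (m : ℝ)) + G with hd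
  set ε : ℕ → ℝ := fun n => (2 * x + 1) / ((n : ℝ) + 1) * (x - 1) + |d n| with hε
  have hεpos : ∀ n, 0 ≤ ε n := by
    intro n
    have : 0 ≤ x - 1 := by linarith
    positivity
  have hlimd : Tendsto d atTop (nhds 0) := by
    have h1 := Real.tendsto_harmonic_sub_log.comp (tendsto_add_atTop_nat 1)
    have h2 := tendsto_one_div_add_atTop_nhds_zero_nat (𝕜 := ℝ)
    have h2' := h2.comp (tendsto_add_atTop_nat 1)
    have h3 := (h1.add h2').const_sub G
    rw [← hG] at h3
    simp only [add_zero, sub_self] at h3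
    refine h3.congr ?_
    intro n
    simp only [hd, Function.comp, Finset.sum_range_succ _ (n + 1), harmonic]
    push_cast
    have : ∀ m : ℕ, (1 : ℝ) / (1 + m) = ((m : ℝ) + 1)⁻¹ := by intro m; rw [one_div, add_comm]
    simp only [this]
    rw [show (1 : ℝ) / (1 + ((n : ℝ) + 1)) = 1 / ((n : ℝ) + 1 + 1) by rw [add_comm]]
    ring
  have hlimε : Tendsto ε atTop (nhds 0) := by
    have h2 := tendsto_one_div_add_atTop_nhds_zero_nat (𝕜 := ℝ)
    have := ((h2.const_mul (2 * x + 1)).mul_const (x - 1)).add hlimd.abs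
    simp only [mul_zero, zero_mul, abs_zero, add_zero] at this
    refine this.congr ?_
    intro n
    simp only [hε]
    ring
  have key : ∀ n : ℕ, (c / x * ((x - 1) ^ 2 / 2) - ε n * x) -
      (c / x * ((1 - 1) ^ 2 / 2) - ε n * 1) ≤
      (Real.BohrMollerup.logGammaSeq x (n + 1) - (x - G) * Real.log x + x) -
      (Real.BohrMollerup.logGammaSeq 1 (n + 1) - (1 - G) * Real.log 1 + 1) := by
    intro n
    refine cmp (g := fun t => c / x * ((t - 1) ^ 2 / 2) - ε n * t)
      (g' := fun t => c / x * (t - 1) - ε n * 1)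
      (f := fun t => Real.BohrMollerup.logGammaSeq t (n + 1) - (t - G) * Real.log t + t)
      (f' := fun t => Real.log (n + 1 : ℕ) - ∑ m ∈ Finset.range (n + 1 + 1), 1 / (t + m) -
        (1 * Real.log t + (t - G) * t⁻¹) + 1) hx.le ?_ ?_ ?_
    · intro t h1 _
      have h0 : t ≠ 0 := by positivity
      exact ((hasDerivAt_seq (n + 1) t h1).sub
        (((hasDerivAt_id t).sub_const G).mul (Real.hasDerivAt_log h0))).add (hasDerivAt_id t)
    · intro t _ _
      refine HasDerivAt.sub ?_ ((hasDerivAt_id t).const_mul _)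
      have := ((((hasDerivAt_id t).sub_const 1).pow 2).div_const 2).const_mul (c / x)
      have e : c / x * (t - 1) = c / x * (((2 : ℕ) : ℝ) * (id t - 1) ^ (2 - 1) * 1 / 2) := by
        simp
      rw [e]
      exact this
    · intro t h1 h2
      have h0 : 0 < t := by linarith
      have hP := P_lower (x := t) c ((2 * x + 1) / ((n : ℝ) + 1)) G n (by
        intro s hs1 hs2
        refine le_trans ?_ (E_lower s hs1 n)
        have hsx : s ≤ x := hs2.trans h2
        apply sub_le_sub
        · rw [hc]; gcongr
        · gcongr) h1
      have hx0 : 0 < x := by linarith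
      have hdn : -|d n| ≤ d n := neg_abs_le _
      have h3 : (2 * x + 1) / ((n : ℝ) + 1) * (t - 1) ≤ (2 * x + 1) / ((n : ℝ) + 1) * (x - 1) := by
        gcongr
      have h4 : c * (t - 1) - ε n ≤ t * (Real.log (n + 1 : ℕ) - Real.log t) -
          ∑ m ∈ Finset.range (n + 2), t / (t + m) + G := by
        simp only [hε]
        simp only [hd] at hdn ⊢
        linarith
      have h5 : c / x * (t - 1) - ε n * 1 ≤ (c * (t - 1) - ε n) / t := by
        rw [sub_div]
        apply sub_le_sub
        · rw [div_mul_eq_mul_div]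
          apply div_le_div_of_nonneg_left _ h0 h2
          exact mul_nonneg hcpos.le (by linarith)
        · rw [mul_one]; exact div_le_self (hεpos n) h1
      refine h5.trans ?_
      rw [div_le_iff₀ h0]
      refine h4.trans_eq ?_
      have e : ∀ m : ℕ, t / (t + m) = 1 / (t + m) * t := by intro m; ring
      simp only [e]
      rw [← Finset.sum_mul]
      field_simp
      ring
  have hlim : ∀ y : ℝ, 0 < y → Tendsto (fun n => Real.BohrMollerup.logGammaSeq y (n + 1)) atTop
      (nhds (Real.log (Real.Gamma y))) := fun y hy =>
    (Real.BohrMollerup.tendsto_log_gamma hy).comp (tendsto_add_atTop_nat 1)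
  have hR := (((hlim x (by linarith)).sub_const ((x - G) * Real.log x)).add_const x).sub
    (((hlim 1 one_pos).sub_const ((1 - G) * Real.log 1)).add_const 1)
  have hL := ((hlimε.mul_const x).const_sub (c / x * ((x - 1) ^ 2 / 2))).sub
    ((hlimε.mul_const 1).const_sub (c / x * ((1 - 1) ^ 2 / 2)))
  have hfin := le_of_tendsto_of_tendsto' hL hR key
  have hpos : 0 < c / x * ((x - 1) ^ 2 / 2) := by
    have : 0 < x - 1 := by linarith
    positivity
  simp only [Real.Gamma_one, Real.log_one] at hfin
  ring_nf at hfin hpos ⊢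
  linarith

end Stmt9Aux

theorem stmt9 :
    ∀ x δ : ℝ, 1 < x → 1 < x + δ →
      Real.Gamma (x + δ) / Real.Gamma x >
        Real.exp (-δ) * (1 + δ / x) ^ (x + δ - Real.eulerMascheroniConstant) *
          x ^ (1 / 2 + δ - Real.eulerMascheroniConstant) := by
  intro x δ hx hy
  have hx0 : 0 < x := by linarith
  have hy0 : 0 < x + δ := by linarith
  have h1 := Stmt9Aux.gamma_upper hx
  have h2 := Stmt9Aux.gamma_lower hy
  have hG1 := Real.Gamma_pos_of_pos hx0
  have hG2 := Real.Gamma_pos_of_pos hy0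
  have e : 1 + δ / x = (x + δ) / x := by field_simp
  have hq : 0 < (x + δ) / x := by positivity
  rw [e, gt_iff_lt, Real.rpow_def_of_pos hq, Real.rpow_def_of_pos hx0, ← Real.exp_add,
    ← Real.exp_add, ← Real.exp_log (div_pos hG2 hG1), Real.exp_lt_exp,
    Real.log_div hy0.ne' hx0.ne', Real.log_div hG2.ne' hG1.ne']
  linarith
end

section
/- Let β,γ > -1. There exists a constant C > 0, depending only on β and γ, such that for all integers 0 ≤ k ≤ n: C̃_n^k(γ,β) ≤ C·n!·k!·Γ(n+β+1)·Γ(n+γ+1)/(4^n·e^{2k}). -/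
open Real MeasureTheory Set Filter

open Asymptotics


lemma gamma_lower (β : ℝ) (hβ : -1 < β) :
    ∃ m : ℝ, 0 < m ∧ ∀ i : ℕ, m ≤ Real.Gamma ((i : ℝ) + β + 1) := by
  have h1 : 0 < Real.Gamma (β + 1) := Real.Gamma_pos_of_pos (by linarith)
  have h2 : 0 < Real.Gamma (β + 2) := Real.Gamma_pos_of_pos (by linarith)
  refine ⟨min (Real.Gamma (β + 1)) (Real.Gamma (β + 2)), lt_min h1 h2, ?_⟩
  have key : ∀ i : ℕ, Real.Gamma (β + 2) ≤ Real.Gamma ((i : ℝ) + β + 2) := by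
    intro i
    induction i with
    | zero => simp
    | succ i ih =>
      have hi : (0 : ℝ) ≤ i := Nat.cast_nonneg i
      have e : ((i + 1 : ℕ) : ℝ) + β + 2 = ((i : ℝ) + β + 2) + 1 := by push_cast; ring
      rw [e, Real.Gamma_add_one (by linarith)]
      have := Real.Gamma_pos_of_pos (show 0 < (i : ℝ) + β + 2 by linarith)
      nlinarith
  intro i
  cases i with
  | zero => simp
  | succ i =>
    refine (min_le_right _ _).trans ((key i).trans (le_of_eq ?_))
    congr 1
    push_cast; ring

lemma genBinom_nat (a b : ℕ) (h : b ≤ a) : genBinom (a : ℝ) b = (a.choose b : ℝ) := by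
  unfold genBinom
  have e : (a : ℝ) - b + 1 = ((a - b : ℕ) : ℝ) + 1 := by rw [Nat.cast_sub h]
  rw [e, Real.Gamma_nat_eq_factorial, Real.Gamma_nat_eq_factorial, Nat.cast_choose ℝ h]

lemma genBinom_le (x m : ℝ) (j : ℕ) (hm : 0 < m) (hx : 0 ≤ Real.Gamma (x + 1))
    (h : m ≤ Real.Gamma (x - j + 1)) :
    0 ≤ genBinom x j ∧ genBinom x j ≤ Real.Gamma (x + 1) / m := by
  unfold genBinom
  have hf : (1 : ℝ) ≤ j.factorial := by exact_mod_cast Nat.factorial_pos j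
  have hG : 0 < Real.Gamma (x - j + 1) := hm.trans_le h
  refine ⟨by positivity, ?_⟩
  apply div_le_div_of_nonneg_left hx hm
  nlinarith

lemma choose_le_pow (a b n : ℕ) (h : a ≤ n) : (a.choose b : ℝ) ≤ 2 ^ n := by
  have : a.choose b ≤ 2 ^ n :=
    (Nat.choose_le_two_pow a b).trans (Nat.pow_le_pow_right (by norm_num) h)
  exact_mod_cast this

theorem stmt10 (β γ : ℝ) (hβ : -1 < β) (hγ : -1 < γ) :
    ∃ C : ℝ, 0 < C ∧ ∀ n k : ℕ, k ≤ n →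
      Ctilde γ β n k ≤ C * n.factorial * k.factorial * Real.Gamma (n + β + 1) *
        Real.Gamma (n + γ + 1) / (4 ^ n * Real.exp (2 * k)) := by
  obtain ⟨m, hm, hmβ⟩ := gamma_lower β hβ
  obtain ⟨l, hl, hlγ⟩ := gamma_lower γ hγ
  refine ⟨Real.exp (64 * Real.exp 2) / (m * l), by positivity, ?_⟩
  intro n k hk
  have hB : 0 < Real.Gamma ((n : ℝ) + β + 1) := hm.trans_le (hmβ n)
  have hG : 0 < Real.Gamma ((n : ℝ) + γ + 1) := hl.trans_le (hlγ n)
  set B := Real.Gamma ((n : ℝ) + β + 1) with hBdef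
  set G := Real.Gamma ((n : ℝ) + γ + 1) with hGdef
  have hterm : Ctilde γ β n k ≤ ∑ i ∈ Finset.range (k + 1),
      (2 ^ n * (G / l) * (B / m) * 2 ^ n * 2 ^ n * (k.factorial : ℝ)) := by
    unfold Ctilde
    apply Finset.sum_le_sum
    intro i hi
    have hik : i ≤ k := by simpa [Nat.lt_succ_iff] using hi
    have hin : i ≤ n := hik.trans hk
    have e1 : ((n : ℝ) - i) = ((n - i : ℕ) : ℝ) := by rw [Nat.cast_sub hin]
    obtain ⟨a0, a1⟩ := genBinom_le ((n : ℝ) + γ) l (n - i) hl hG.le (by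
      have := hlγ i
      convert this using 2
      rw [Nat.cast_sub hin]; ring)
    obtain ⟨b0, b1⟩ := genBinom_le ((n : ℝ) + β) m i hm hB.le (by
      have := hmβ (n - i)
      convert this using 2
      rw [Nat.cast_sub hin]; ring)
    rw [e1, genBinom_nat _ _ (Nat.sub_le_sub_right hk i)]
    have c1 := choose_le_pow n i n le_rfl
    have c2 := choose_le_pow k i n hk
    have c3 := choose_le_pow (n - i) (k - i) n (Nat.sub_le _ _)
    have c4 : (i.factorial : ℝ) ≤ k.factorial := by exact_mod_cast Nat.factorial_le hik
    gcongr
  refine hterm.trans ?_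
  rw [Finset.sum_const, Finset.card_range, nsmul_eq_mul]
  have hk2 : ((k + 1 : ℕ) : ℝ) ≤ 2 ^ n := by
    have : k + 1 ≤ 2 ^ n := (Nat.succ_le_succ hk).trans Nat.lt_two_pow_self
    exact_mod_cast this
  have hexp : Real.exp (2 * k) ≤ Real.exp 2 ^ n := by
    rw [← Real.exp_nat_mul]
    apply Real.exp_le_exp.mpr
    have : (k : ℝ) ≤ n := by exact_mod_cast hk
    linarith
  have hp := Real.pow_div_factorial_le_exp (64 * Real.exp 2) (by positivity) n
  have hf : (0 : ℝ) < n.factorial := by exact_mod_cast Nat.factorial_pos n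
  rw [div_le_iff₀ hf] at hp
  rw [le_div_iff₀ (by positivity)]
  calc _ ≤ 2 ^ n * (2 ^ n * (G / l) * (B / m) * 2 ^ n * 2 ^ n * (k.factorial : ℝ)) *
        (4 ^ n * Real.exp 2 ^ n) := by gcongr
    _ = (64 * Real.exp 2) ^ n * (k.factorial * (G / l) * (B / m)) := by
        have : (64 : ℝ) ^ n = 2 ^ n * 2 ^ n * 2 ^ n * 2 ^ n * 4 ^ n := by
          simp only [← mul_pow]; norm_num
        rw [mul_pow, this]; ring
    _ ≤ (Real.exp (64 * Real.exp 2) * n.factorial) * (k.factorial * (G / l) * (B / m)) := by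
        gcongr
    _ = _ := by field_simp
end

section
/- Let β,γ > -1. There exists a constant C > 0 such that for all integers 0 ≤ k ≤ n: (n!·k!·Γ(n+β+1)·Γ(n+γ+1)/Γ(n-k+1))·Σ_{i=0}^k 1/(i!·(k-i)!·Γ(n+β-i+1)·Γ(γ+i+1)) ≤ C·n!·k!·Γ(n+β+1)·Γ(n+γ+1)·4^{-n}·e^{-2k}. -/
open Real MeasureTheory Set Filter

open Asymptotics


theorem gamma_lb (β : ℝ) (hβ : -1 < β) :
    ∃ m : ℝ, 0 < m ∧ ∀ j : ℕ, m ≤ Real.Gamma (β + j + 1) := by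
  have h1 : 0 < Real.Gamma (β + 1) := Real.Gamma_pos_of_pos (by linarith)
  have h2 : 0 < Real.Gamma (β + 2) := Real.Gamma_pos_of_pos (by linarith)
  refine ⟨min (Real.Gamma (β + 1)) (Real.Gamma (β + 2)), lt_min h1 h2, ?_⟩
  have key : ∀ j : ℕ, Real.Gamma (β + 2) ≤ Real.Gamma (β + j + 2) := by
    intro j
    induction j with
    | zero => simp
    | succ j ih =>
      have hj : (0 : ℝ) ≤ j := Nat.cast_nonneg j
      have e : β + ((j + 1 : ℕ) : ℝ) + 2 = (β + j + 2) + 1 := by push_cast; ring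
      rw [e, Real.Gamma_add_one (by linarith)]
      nlinarith
  intro j
  cases j with
  | zero => simp
  | succ j =>
    have e : β + ((j + 1 : ℕ) : ℝ) + 1 = β + j + 2 := by push_cast; ring
    rw [e]
    exact (min_le_right _ _).trans (key j)

theorem stmt11 (β γ : ℝ) (hβ : -1 < β) (hγ : -1 < γ) :
    ∃ C : ℝ, 0 < C ∧ ∀ n k : ℕ, k ≤ n →
      ((n.factorial : ℝ) * k.factorial * Real.Gamma (n + β + 1) * Real.Gamma (n + γ + 1) /
          Real.Gamma ((n : ℝ) - k + 1)) *
        (∑ i ∈ Finset.range (k + 1),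
          1 / (i.factorial * (k - i).factorial * Real.Gamma ((n : ℝ) + β - i + 1) *
            Real.Gamma (γ + i + 1))) ≤
      C * n.factorial * k.factorial * Real.Gamma (n + β + 1) * Real.Gamma (n + γ + 1) *
        (4 : ℝ) ^ (-(n : ℝ)) * Real.exp (-2 * k) := by
  obtain ⟨m₁, hm₁, h₁⟩ := gamma_lb β hβ
  obtain ⟨m₂, hm₂, h₂⟩ := gamma_lb γ hγ
  refine ⟨Real.exp (16 * Real.exp 2) / (m₁ * m₂), by positivity, ?_⟩
  intro n k hkn
  have hn : (0 : ℝ) ≤ n := Nat.cast_nonneg n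
  have g1 : 0 < Real.Gamma (n + β + 1) := Real.Gamma_pos_of_pos (by linarith)
  have g2 : 0 < Real.Gamma (n + γ + 1) := Real.Gamma_pos_of_pos (by linarith)
  have e1 : Real.Gamma ((n : ℝ) - k + 1) = ((n - k).factorial : ℝ) := by
    rw [← Nat.cast_sub hkn, Real.Gamma_nat_eq_factorial]
  rw [e1]
  have hsum : (∑ i ∈ Finset.range (k + 1),
          1 / (i.factorial * (k - i).factorial * Real.Gamma ((n : ℝ) + β - i + 1) *
            Real.Gamma (γ + i + 1))) ≤ 2 ^ k / (k.factorial * (m₁ * m₂)) := by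
    have : (2 : ℝ) ^ k / (k.factorial * (m₁ * m₂)) =
        ∑ i ∈ Finset.range (k + 1), (k.choose i : ℝ) / (k.factorial * (m₁ * m₂)) := by
      rw [← Finset.sum_div]
      congr 1
      exact_mod_cast (Nat.sum_range_choose k).symm
    rw [this]
    apply Finset.sum_le_sum
    intro i hi
    have hik : i ≤ k := by
      have := Finset.mem_range.mp hi
      omega
    have hb := h₁ (n - i)
    have e : β + ((n - i : ℕ) : ℝ) + 1 = (n : ℝ) + β - i + 1 := by
      rw [Nat.cast_sub (hik.trans hkn)]; ring
    rw [e] at hb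
    have hc := h₂ i
    rw [Nat.cast_choose ℝ hik]
    have hk : (0 : ℝ) < k.factorial := by positivity
    have e2 : (k.factorial : ℝ) / (i.factorial * (k - i).factorial) /
        (k.factorial * (m₁ * m₂)) = 1 / (i.factorial * (k - i).factorial * m₁ * m₂) := by
      field_simp
    rw [e2]
    have hb0 := hm₁.trans_le hb
    gcongr
  have hexp : (16 * Real.exp 2) ^ n / (n.factorial : ℝ) ≤ Real.exp (16 * Real.exp 2) :=
    Real.pow_div_factorial_le_exp _ (by positivity) n
  have hbin : (2 : ℝ) ^ k / (k.factorial * (n - k).factorial) ≤ 4 ^ n / n.factorial := by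
    have c1 : (n.choose k : ℝ) ≤ 2 ^ n := by exact_mod_cast Nat.choose_le_two_pow n k
    have c2 : (2 : ℝ) ^ k ≤ 2 ^ n := pow_le_pow_right₀ (by norm_num) hkn
    have c3 : (2 : ℝ) ^ k / (k.factorial * (n - k).factorial)
        = 2 ^ k * n.choose k / n.factorial := by
      rw [Nat.cast_choose ℝ hkn]
      field_simp
    rw [c3, show (4 : ℝ) = 2 * 2 by norm_num, mul_pow]
    gcongr
  have hr : (4 : ℝ) ^ n / n.factorial ≤
      Real.exp (16 * Real.exp 2) * (4 : ℝ) ^ (-(n : ℝ)) * Real.exp (-2 * k) := by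
    have d1 : Real.exp (-2 * n) ≤ Real.exp (-2 * k) := by
      apply Real.exp_le_exp.mpr
      have : (k : ℝ) ≤ n := by exact_mod_cast hkn
      linarith
    have d2 : (4 : ℝ) ^ (-(n : ℝ)) = (4 ^ n)⁻¹ := by
      rw [Real.rpow_neg (by norm_num), Real.rpow_natCast]
    have d3 : Real.exp (-2 * n) = (Real.exp 2 ^ n)⁻¹ := by
      rw [← Real.exp_nat_mul, ← Real.exp_neg]; congr 1; ring
    rw [d2]
    calc (4 : ℝ) ^ n / n.factorial
        = (16 * Real.exp 2) ^ n / (n.factorial : ℝ) * (4 ^ n)⁻¹ * Real.exp (-2 * n) := by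
          rw [d3, show (16 : ℝ) = 4 * 4 by norm_num, mul_pow, mul_pow]
          field_simp
      _ ≤ _ := by gcongr
  calc _ ≤ ((n.factorial : ℝ) * k.factorial * Real.Gamma (n + β + 1) * Real.Gamma (n + γ + 1) /
          ((n - k).factorial : ℝ)) * (2 ^ k / (k.factorial * (m₁ * m₂))) := by gcongr
    _ = ((n.factorial : ℝ) * k.factorial * Real.Gamma (n + β + 1) * Real.Gamma (n + γ + 1) /
          (m₁ * m₂)) * (2 ^ k / (k.factorial * (n - k).factorial)) := by
        field_simp
    _ ≤ ((n.factorial : ℝ) * k.factorial * Real.Gamma (n + β + 1) * Real.Gamma (n + γ + 1) /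
          (m₁ * m₂)) *
          (Real.exp (16 * Real.exp 2) * (4 : ℝ) ^ (-(n : ℝ)) * Real.exp (-2 * k)) := by
        gcongr
        exact hbin.trans hr
    _ = _ := by ring
end

section
/- Let γ > -1. There exists a constant C > 0 such that for every integer k ≥ 0: Σ_{i=0}^k 2^{i+k}/(i!·(k-i)!·Γ(γ+i+1)) ≤ C·e^{-2k}. -/
open Real MeasureTheory Set Filter

open Asymptotics


theorem stmt12_gamma (γ : ℝ) (hγ : -1 < γ) :
    ∃ c : ℝ, 0 < c ∧ ∀ i : ℕ, c ≤ Real.Gamma (γ + i + 1) := by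
  have h1 : 0 < Real.Gamma (γ + 1) := Real.Gamma_pos_of_pos (by linarith)
  have h2 : 0 < Real.Gamma (γ + 2) := Real.Gamma_pos_of_pos (by linarith)
  have key : ∀ i : ℕ, Real.Gamma (γ + 2) ≤ Real.Gamma (γ + (i + 1 : ℕ) + 1) := by
    intro i
    induction i with
    | zero =>
      apply le_of_eq
      congr 1
      push_cast
      ring
    | succ n ih =>
      have hn : (0 : ℝ) ≤ n := Nat.cast_nonneg n
      have e : γ + ((n + 1 + 1 : ℕ) : ℝ) + 1 = (γ + (n + 1 : ℕ) + 1) + 1 := by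
        push_cast
        ring
      have g : (1 : ℝ) ≤ γ + (n + 1 : ℕ) + 1 := by
        push_cast
        linarith
      rw [e, Real.Gamma_add_one (by linarith)]
      nlinarith
  refine ⟨min (Real.Gamma (γ + 1)) (Real.Gamma (γ + 2)), lt_min h1 h2, ?_⟩
  intro i
  cases i with
  | zero => simp
  | succ n => exact (min_le_right _ _).trans (key n)

theorem stmt12 (γ : ℝ) (hγ : -1 < γ) :
    ∃ C : ℝ, 0 < C ∧ ∀ k : ℕ,
      (∑ i ∈ Finset.range (k + 1),
          (2 : ℝ) ^ (i + k) / (i.factorial * (k - i).factorial * Real.Gamma (γ + i + 1))) ≤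
        C * Real.exp (-2 * k) := by
  obtain ⟨c, hc, hG⟩ := stmt12_gamma γ hγ
  refine ⟨c⁻¹ * Real.exp (6 * Real.exp 2), by positivity, ?_⟩
  intro k
  have hk : (0 : ℝ) < k.factorial := by exact_mod_cast k.factorial_pos
  have step : (∑ i ∈ Finset.range (k + 1),
      (2 : ℝ) ^ (i + k) / (i.factorial * (k - i).factorial * Real.Gamma (γ + i + 1))) ≤
      ∑ i ∈ Finset.range (k + 1),
        c⁻¹ * 2 ^ k / k.factorial * ((2 : ℝ) ^ i * 1 ^ (k - i) * (k.choose i : ℝ)) := by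
    apply Finset.sum_le_sum
    intro i hi
    have hik : i ≤ k := by
      have := Finset.mem_range.mp hi
      omega
    have a1 : (0 : ℝ) < i.factorial := by exact_mod_cast i.factorial_pos
    have a2 : (0 : ℝ) < (k - i).factorial := by exact_mod_cast (k - i).factorial_pos
    have e : c⁻¹ * 2 ^ k / k.factorial * ((2 : ℝ) ^ i * 1 ^ (k - i) * (k.choose i : ℝ)) =
        (2 : ℝ) ^ (i + k) / (i.factorial * (k - i).factorial * c) := by
      rw [Nat.cast_choose ℝ hik, pow_add, one_pow]
      field_simp
    rw [e]
    have := hG i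
    gcongr
  refine step.trans ?_
  rw [← Finset.mul_sum, ← add_pow]
  have b := Real.pow_div_factorial_le_exp (6 * Real.exp 2) (by positivity) k
  have e1 : Real.exp 2 ^ k * Real.exp (-2 * k) = 1 := by
    rw [← Real.exp_nat_mul, ← Real.exp_add]
    simp only [Real.exp_eq_one_iff]
    ring
  have e6 : (2 : ℝ) ^ k * (2 + 1) ^ k = 6 ^ k := by
    rw [← mul_pow]
    norm_num
  calc c⁻¹ * 2 ^ k / k.factorial * (2 + 1) ^ k
      = c⁻¹ * (6 ^ k / k.factorial) * (Real.exp 2 ^ k * Real.exp (-2 * k)) := by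
        rw [e1, ← e6]
        ring
    _ = c⁻¹ * ((6 * Real.exp 2) ^ k / k.factorial) * Real.exp (-2 * k) := by
        rw [mul_pow]
        ring
    _ ≤ _ := by gcongr
end

section
/- Let α ∈ (-1,0) and β ∈ [-1/2,1/2]. Define Ξ_{m-1} := Σ_{k=1}^{m-1} k!·Γ(α+β+k+1)/m^{2k-1} for integers m ≥ 2. Then m!·Γ(α+β+m+1)/(m+1)^{2m-1} → 0 as m → ∞, the sequence (Ξ_m) is eventually strictly decreasing (Ξ_m - Ξ_{m-1} < 0 for all sufficiently large m), and consequently there exists C > 0 with Ξ_{m-1} ≤ C for all m ≥ 2. -/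
open Real MeasureTheory Set Filter

open Asymptotics


/-- `Ξ_m = Σ_{k=1}^{m} k!·Γ(α+β+k+1)/(m+1)^{2k-1}`, so that `Ξ_{m-1}` has denominators `m^{2k-1}`. -/
noncomputable def XiSeq (α β : ℝ) (m : ℕ) : ℝ :=
  ∑ k ∈ Finset.Icc 1 m,
    (k.factorial : ℝ) * Real.Gamma (α + β + k + 1) / ((m : ℝ) + 1) ^ (2 * (k : ℝ) - 1)

lemma aux_rpow (x : ℝ) (hx : 0 < x) (k : ℕ) : x ^ (2 * (k : ℝ) - 1) = x ^ (2 * k) / x := by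
  rw [Real.rpow_sub_one hx.ne', ← Real.rpow_natCast]
  push_cast
  rfl

lemma aux_bern (m : ℕ) (hm : 1 ≤ m) :
    2 * ((m : ℝ) + 1) ^ (2 * m) ≤ ((m : ℝ) + 2) ^ (2 * m) := by
  have hm' : (1 : ℝ) ≤ m := by exact_mod_cast hm
  have hp : (0 : ℝ) < (m : ℝ) + 1 := by positivity
  have h := one_add_mul_le_pow (a := 1 / ((m : ℝ) + 1))
    (by have : 0 < 1 / ((m : ℝ) + 1) := by positivity
        linarith) (2 * m)
  have h2 : (2 : ℝ) ≤ 1 + ((2 * m : ℕ) : ℝ) * (1 / ((m : ℝ) + 1)) := by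
    push_cast
    rw [mul_one_div]
    have : 1 ≤ 2 * (m : ℝ) / (m + 1) := by
      rw [le_div_iff₀ hp]; linarith
    linarith
  have h3 : (m : ℝ) + 2 = (1 + 1 / ((m : ℝ) + 1)) * (m + 1) := by
    field_simp; ring
  rw [h3, mul_pow]
  exact mul_le_mul_of_nonneg_right (h2.trans h) (by positivity)

lemma aux_step (s : ℝ) (h1 : -(3 : ℝ) / 2 < s) (h2 : s < 1 / 2) (m : ℕ) (hm : 1 ≤ m) :
    (((m + 1 : ℕ).factorial : ℝ) * Real.Gamma (s + ((m + 1 : ℕ) : ℝ) + 1) /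
        (((m + 1 : ℕ) : ℝ) + 1) ^ (2 * ((m + 1 : ℕ) : ℝ) - 1)) ≤
    (1 / 2) * ((m.factorial : ℝ) * Real.Gamma (s + m + 1) / ((m : ℝ) + 1) ^ (2 * (m : ℝ) - 1)) := by
  have hm' : (1 : ℝ) ≤ m := by exact_mod_cast hm
  have hpos : 0 < s + m + 1 := by linarith
  have hG := Real.Gamma_pos_of_pos hpos
  rw [aux_rpow _ (by positivity), aux_rpow _ (by positivity)]
  have e : s + ((m + 1 : ℕ) : ℝ) + 1 = (s + m + 1) + 1 := by push_cast; ring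
  rw [e, Real.Gamma_add_one hpos.ne', Nat.factorial_succ]
  push_cast
  have e2 : (m : ℝ) + 1 + 1 = m + 2 := by ring
  rw [e2, Nat.mul_succ, pow_add]
  have hb := aux_bern m hm
  set G := Real.Gamma (s + m + 1)
  have hf : (0 : ℝ) < m.factorial := by positivity
  set f : ℝ := (m.factorial : ℝ)
  have hA : (0 : ℝ) < ((m : ℝ) + 1) ^ (2 * m) := by positivity
  have hB : (0 : ℝ) < ((m : ℝ) + 2) ^ (2 * m) := by positivity
  set A := ((m : ℝ) + 1) ^ (2 * m)
  set B := ((m : ℝ) + 2) ^ (2 * m)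
  have L : (((m : ℝ) + 1) * f * ((s + m + 1) * G)) / (B * (m + 2) ^ 2 / (m + 2))
      = (f * G * (m + 1)) * ((s + m + 1) / ((m + 2) * B)) := by
    field_simp
  have R : 1 / 2 * (f * G / (A / ((m : ℝ) + 1))) = (f * G * (m + 1)) * (1 / (2 * A)) := by
    field_simp
  rw [L, R]
  apply mul_le_mul_of_nonneg_left _ (by positivity)
  rw [div_le_div_iff₀ (by positivity) (by positivity)]
  have : (s + m + 1) * (2 * A) ≤ (m + 2) * B :=
    mul_le_mul (by linarith) hb (by positivity) (by positivity)
  linarith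

theorem stmt13 (α β : ℝ) (hα : α ∈ Set.Ioo (-1 : ℝ) 0)
    (hβ : β ∈ Set.Icc (-(1 : ℝ) / 2) (1 / 2)) :
    Tendsto (fun m : ℕ =>
        (m.factorial : ℝ) * Real.Gamma (α + β + m + 1) / ((m : ℝ) + 1) ^ (2 * (m : ℝ) - 1))
      atTop (nhds 0) ∧
    (∃ M : ℕ, ∀ m : ℕ, M ≤ m → XiSeq α β (m + 1) < XiSeq α β m) ∧
    ∃ C : ℝ, 0 < C ∧ ∀ m : ℕ, 1 ≤ m → XiSeq α β m ≤ C := by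
  have h1 : -(3 : ℝ) / 2 < α + β := by linarith [hα.1, hβ.1]
  have h2 : α + β < 1 / 2 := by linarith [hα.2, hβ.2]
  set s := α + β with hs
  have hstep := aux_step s h1 h2
  set T : ℕ → ℝ := fun m : ℕ =>
        (m.factorial : ℝ) * Real.Gamma (s + m + 1) / ((m : ℝ) + 1) ^ (2 * (m : ℝ) - 1) with hT
  have hstep' : ∀ m : ℕ, 1 ≤ m → T (m + 1) ≤ (1 / 2) * T m := hstep
  have hGp : ∀ k : ℕ, 1 ≤ k → 0 < (k.factorial : ℝ) * Real.Gamma (s + k + 1) := by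
    intro k hk
    have : (1 : ℝ) ≤ k := by exact_mod_cast hk
    have := Real.Gamma_pos_of_pos (show 0 < s + k + 1 by linarith)
    positivity
  have hTp : ∀ m : ℕ, 1 ≤ m → 0 < T m := by
    intro m hm
    have := hGp m hm
    simp only [hT]
    positivity
  have hgeo : ∀ m : ℕ, 1 ≤ m → T m ≤ (2 * T 1) * (1 / 2) ^ m := by
    intro m hm
    induction m, hm using Nat.le_induction with
    | base => linarith
    | succ n hn ih =>
      have := hstep' n hn
      rw [pow_succ]
      linarith
  have hsq : Tendsto (fun n : ℕ => (4 * T 1) * ((n : ℝ) ^ 2 * (1 / 2) ^ n)) atTop (nhds 0) := by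
    have := (tendsto_pow_const_mul_const_pow_of_abs_lt_one 2
      (show |(1 / 2 : ℝ)| < 1 by rw [abs_of_pos] <;> norm_num)).const_mul (4 * T 1)
    simpa using this
  have hbd : ∀ n : ℕ, 1 ≤ n → (n : ℝ) * (n + 1) * T n ≤ (4 * T 1) * ((n : ℝ) ^ 2 * (1 / 2) ^ n) := by
    intro n hn
    have hn' : (1 : ℝ) ≤ n := by exact_mod_cast hn
    have h3 : (n : ℝ) * (n + 1) ≤ 2 * n ^ 2 := by nlinarith
    have := mul_le_mul h3 (hgeo n hn) (hTp n hn).le (by positivity)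
    linarith
  have hTle : ∀ n : ℕ, 1 ≤ n → T n ≤ (n : ℝ) * (n + 1) * T n := by
    intro n hn
    have hn' : (1 : ℝ) ≤ n := by exact_mod_cast hn
    have := hTp n hn
    exact le_mul_of_one_le_left this.le (by nlinarith)
  have hdec : ∃ M : ℕ, ∀ m : ℕ, M ≤ m → XiSeq α β (m + 1) < XiSeq α β m := by
    have hev := hsq.eventually_lt_const (hGp 1 le_rfl)
    obtain ⟨M, hM⟩ := eventually_atTop.1 hev
    refine ⟨M + 1, fun m hm => ?_⟩
    have hm1 : 1 ≤ m := by omega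
    have hlt := (hbd (m + 1) (by omega)).trans_lt (hM (m + 1) (by omega))
    unfold XiSeq
    rw [Finset.sum_Icc_succ_top (by omega)]
    have hlast : ((m + 1 : ℕ).factorial : ℝ) * Real.Gamma (α + β + ((m + 1 : ℕ) : ℝ) + 1) /
        (((m + 1 : ℕ) : ℝ) + 1) ^ (2 * ((m + 1 : ℕ) : ℝ) - 1) = T (m + 1) := rfl
    rw [hlast, ← Finset.add_sum_Ioc_eq_sum_Icc hm1, ← Finset.add_sum_Ioc_eq_sum_Icc hm1]
    have htail : ∑ k ∈ Finset.Ioc 1 m,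
        (k.factorial : ℝ) * Real.Gamma (α + β + k + 1) /
          (((m + 1 : ℕ) : ℝ) + 1) ^ (2 * (k : ℝ) - 1) ≤
        ∑ k ∈ Finset.Ioc 1 m,
        (k.factorial : ℝ) * Real.Gamma (α + β + k + 1) / ((m : ℝ) + 1) ^ (2 * (k : ℝ) - 1) := by
      apply Finset.sum_le_sum
      intro k hk
      have hk1 : 1 ≤ k := (Finset.mem_Ioc.1 hk).1.le
      have hk' : (1 : ℝ) ≤ k := by exact_mod_cast hk1
      apply div_le_div_of_nonneg_left (hGp k hk1).le (by positivity)
      apply Real.rpow_le_rpow (by positivity) (by push_cast; linarith) (by linarith)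
    have hfirst : ((1 : ℕ).factorial : ℝ) * Real.Gamma (α + β + (1 : ℕ) + 1) /
          (((m + 1 : ℕ) : ℝ) + 1) ^ (2 * ((1 : ℕ) : ℝ) - 1) + T (m + 1) <
        ((1 : ℕ).factorial : ℝ) * Real.Gamma (α + β + (1 : ℕ) + 1) /
          ((m : ℝ) + 1) ^ (2 * ((1 : ℕ) : ℝ) - 1) := by
      have e : (2 * ((1 : ℕ) : ℝ) - 1) = 1 := by norm_num
      rw [e, Real.rpow_one, Real.rpow_one]
      change _ < ((1 : ℕ).factorial : ℝ) * Real.Gamma (α + β + (1 : ℕ) + 1) at hlt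
      set a := ((1 : ℕ).factorial : ℝ) * Real.Gamma (α + β + (1 : ℕ) + 1)
      push_cast at hlt ⊢
      have hp1 : (0 : ℝ) < (m : ℝ) + 1 := by positivity
      have hp2 : (0 : ℝ) < (m : ℝ) + 1 + 1 := by positivity
      have e2 : a / ((m : ℝ) + 1) - a / ((m : ℝ) + 1 + 1) = a / (((m : ℝ) + 1) * (m + 1 + 1)) := by
        field_simp
        ring
      have : T (m + 1) < a / (((m : ℝ) + 1) * (m + 1 + 1)) := by
        rw [lt_div_iff₀ (by positivity)]; linarith
      linarith
    linarith
  refine ⟨?_, hdec, ?_⟩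
  · apply tendsto_of_tendsto_of_tendsto_of_le_of_le' tendsto_const_nhds hsq
    · filter_upwards [eventually_ge_atTop 1] with n hn using (hTp n hn).le
    · filter_upwards [eventually_ge_atTop 1] with n hn using (hTle n hn).trans (hbd n hn)
  · obtain ⟨M, hM⟩ := hdec
    refine ⟨1 + ∑ i ∈ Finset.range (M + 1), |XiSeq α β i|, by positivity, fun m _ => ?_⟩
    have hsmall : ∀ i ≤ M, XiSeq α β i ≤ 1 + ∑ i ∈ Finset.range (M + 1), |XiSeq α β i| := by
      intro i hi
      have := Finset.single_le_sum (f := fun i => |XiSeq α β i|) (fun i _ => abs_nonneg _)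
        (Finset.mem_range.2 (show i < M + 1 by omega))
      have h4 := le_abs_self (XiSeq α β i)
      linarith
    rcases le_total m M with h | h
    · exact hsmall m h
    · induction m, h using Nat.le_induction with
      | base => exact hsmall M le_rfl
      | succ n hn ih =>
        rcases Nat.eq_zero_or_pos n with h0 | h0
        · have := hM n hn
          have h5 := hsmall n (by omega)
          linarith
        · exact (hM n hn).le.trans (ih h0)
end

section
/- Let α ∈ (-1,0) and β,γ ∈ [-1/2,1/2]. Define d_k := 4^k·Σ_{i=0}^k 2^i/(i!·(k-i)!·Γ(γ+i+1)). Then for every integer m ≥ 1 the series Σ_{k=m}^∞ d_k·k!·Γ(α+γ+k+1)/(2^k·Γ(α+γ+k+β+m+2)·Γ(k+α-m+1)) converges, and there exists a constant C > 0 such that this sum is at most C for every m ≥ 1. -/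
open Real MeasureTheory Set Filter

open Asymptotics


/-- `d_k = 4^k·Σ_{i=0}^k 2^i/(i!·(k-i)!·Γ(γ+i+1))`. -/
noncomputable def dCoef (γ : ℝ) (k : ℕ) : ℝ :=
  (4 : ℝ) ^ k * ∑ i ∈ Finset.range (k + 1),
    (2 : ℝ) ^ i / (i.factorial * (k - i).factorial * Real.Gamma (γ + i + 1))

theorem gam_mono {x y : ℝ} (hx : 2 ≤ x) (h : x ≤ y) : Real.Gamma x ≤ Real.Gamma y :=
  Real.Gamma_strictMonoOn_Ici.monotoneOn hx (le_trans hx h) h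

theorem gam_two {x : ℝ} (hx : 0 < x) : Real.Gamma (x + 2) = x * (x + 1) * Real.Gamma x := by
  have h1 := Real.Gamma_add_one hx.ne'
  have h2 := Real.Gamma_add_one (s := x + 1) (by positivity)
  rw [show x + 2 = x + 1 + 1 by ring, h2, h1]; ring

theorem gam_lower {x : ℝ} (hx : 0 < x) : 1 / 6 ≤ Real.Gamma x := by
  rcases le_total x 2 with h | h
  · have h1 := gam_two hx
    have h2 : Real.Gamma 2 ≤ Real.Gamma (x + 2) := gam_mono le_rfl (by linarith)
    rw [Real.Gamma_two, h1] at h2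
    have hg := Real.Gamma_pos_of_pos hx
    have : x * (x + 1) ≤ 6 := by nlinarith
    nlinarith
  · have h2 : Real.Gamma 2 ≤ Real.Gamma x := gam_mono le_rfl h
    rw [Real.Gamma_two] at h2
    linarith

theorem gam_ratio {x s : ℝ} (hx : 1 / 2 ≤ x) (hs : 1 / 2 ≤ s) (hs' : s ≤ 3 / 2) :
    Real.Gamma x ≤ 8 * Real.Gamma (x + s) := by
  have h1 := gam_two (x := x) (by linarith)
  have h2 := gam_two (x := x + s) (by linarith)
  have h3 : Real.Gamma (x + 2) ≤ Real.Gamma (x + s + 2) := gam_mono (by linarith) (by linarith)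
  have hg := Real.Gamma_pos_of_pos (s := x + s) (by linarith)
  rw [h1, h2] at h3
  have h4 : (x + s) * (x + s + 1) ≤ 8 * (x * (x + 1)) := by nlinarith
  have h5 : 0 < x * (x + 1) := by nlinarith
  have h6 : x * (x + 1) * Real.Gamma x ≤ x * (x + 1) * (8 * Real.Gamma (x + s)) := by nlinarith
  exact le_of_mul_le_mul_left h6 h5

theorem gam_fact {y : ℝ} (hy : 1 ≤ y) (m : ℕ) :
    (m.factorial : ℝ) * Real.Gamma y ≤ Real.Gamma (y + m) := by
  induction m with
  | zero => simp
  | succ m ih =>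
    have h1 := Real.Gamma_add_one (s := y + m) (by positivity)
    have hg := Real.Gamma_pos_of_pos (s := y + m) (by positivity)
    have hy' := Real.Gamma_pos_of_pos (s := y) (by positivity)
    rw [Nat.factorial_succ]
    push_cast
    rw [← add_assoc, h1, mul_assoc]
    have hm : (0:ℝ) ≤ m := by positivity
    gcongr ?_ * ?_
    linarith

theorem gam_j {a : ℝ} (ha : 0 < a) (ha' : a ≤ 1) (j : ℕ) :
    (j.factorial : ℝ) ≤ 2 * 2 ^ j * Real.Gamma (j + a) := by
  have hj : (0:ℝ) ≤ j := by positivity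
  have h1 := gam_two (x := j + a) (by positivity)
  have h2 : Real.Gamma ((j + 1 : ℕ) + 1) ≤ Real.Gamma (j + a + 2) :=
    gam_mono (by push_cast; linarith) (by push_cast; linarith)
  rw [Real.Gamma_nat_eq_factorial, h1, Nat.factorial_succ] at h2
  push_cast at h2
  have hg := Real.Gamma_pos_of_pos (s := j + a) (by positivity)
  have h3 : (j:ℝ) + 2 ≤ 2 * 2 ^ j := by
    have : j + 1 ≤ 2 ^ j := Nat.lt_two_pow_self
    have h : (j:ℝ) + 1 ≤ 2 ^ j := by exact_mod_cast this
    have : (1:ℝ) ≤ 2 ^ j := one_le_pow₀ (by norm_num)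
    linarith
  have h4 : (j + a) * (j + a + 1) * Real.Gamma (j + a) ≤
      (j + 1) * (2 * 2 ^ j) * Real.Gamma (j + a) := by
    gcongr ?_ * ?_ * _ <;> linarith
  have h5 : ((j:ℝ) + 1) * j.factorial ≤ (j + 1) * (2 * 2 ^ j * Real.Gamma (j + a)) := by
    nlinarith
  exact le_of_mul_le_mul_left h5 (by positivity)

theorem dCoef_bound {γ : ℝ} (hγ : -(1 : ℝ) / 2 ≤ γ) (k : ℕ) :
    0 ≤ dCoef γ k ∧ dCoef γ k * (k.factorial : ℝ) ≤ 6 * 12 ^ k := by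
  have hpos : ∀ i : ℕ, 0 < γ + i + 1 := fun i => by
    have : (0:ℝ) ≤ i := by positivity
    linarith
  constructor
  · unfold dCoef
    refine mul_nonneg (by positivity) (Finset.sum_nonneg fun i _ => ?_)
    have := Real.Gamma_pos_of_pos (hpos i)
    positivity
  · unfold dCoef
    rw [mul_assoc, Finset.sum_mul]
    have h3 : (3:ℝ) ^ k = ∑ i ∈ Finset.range (k + 1), (2:ℝ) ^ i * (k.choose i : ℝ) := by
      have := add_pow (2:ℝ) 1 k
      norm_num at this
      exact this
    rw [show (12:ℝ) ^ k = 4 ^ k * 3 ^ k by rw [← mul_pow]; norm_num, h3,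
      show ∀ a b : ℝ, 6 * (a * b) = a * (6 * b) by intros; ring]
    refine mul_le_mul_of_nonneg_left ?_ (by positivity)
    rw [Finset.mul_sum]
    refine Finset.sum_le_sum fun i hi => ?_
    have hik : i ≤ k := by simpa [Nat.lt_succ_iff] using hi
    rw [Nat.cast_choose ℝ hik]
    have hl := gam_lower (hpos i)
    have hg := Real.Gamma_pos_of_pos (hpos i)
    have hG : (Real.Gamma (γ + i + 1))⁻¹ ≤ 6 := by
      rw [inv_le_comm₀ hg (by norm_num)]; linarith
    calc (2:ℝ) ^ i / (i.factorial * (k - i).factorial * Real.Gamma (γ + i + 1)) * k.factorial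
        = (2:ℝ) ^ i * (k.factorial / (i.factorial * (k - i).factorial)) *
          (Real.Gamma (γ + i + 1))⁻¹ := by field_simp
      _ ≤ (2:ℝ) ^ i * (k.factorial / (i.factorial * (k - i).factorial)) * 6 := by gcongr
      _ = _ := by ring

theorem term_bound {α β γ : ℝ} (hα : α ∈ Set.Ioo (-1 : ℝ) 0)
    (hβ : β ∈ Set.Icc (-(1 : ℝ) / 2) (1 / 2)) (hγ : γ ∈ Set.Icc (-(1 : ℝ) / 2) (1 / 2))
    (m : ℕ) (hm : 1 ≤ m) (j : ℕ) :
    0 ≤ dCoef γ (m + j) * ((m + j).factorial : ℝ) *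
        Real.Gamma (α + γ + (m + j) + 1) /
        ((2 : ℝ) ^ (m + j) * Real.Gamma (α + γ + (m + j) + β + m + 2) *
          Real.Gamma (((m + j : ℕ) : ℝ) + α - m + 1)) ∧
    dCoef γ (m + j) * ((m + j).factorial : ℝ) *
        Real.Gamma (α + γ + (m + j) + 1) /
        ((2 : ℝ) ^ (m + j) * Real.Gamma (α + γ + (m + j) + β + m + 2) *
          Real.Gamma (((m + j : ℕ) : ℝ) + α - m + 1)) ≤
      96 * Real.exp 6 * (12 ^ j / j.factorial) := by
  obtain ⟨hα1, hα2⟩ := hα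
  obtain ⟨hβ1, hβ2⟩ := hβ
  obtain ⟨hγ1, hγ2⟩ := hγ
  have hm' : (1:ℝ) ≤ m := by exact_mod_cast hm
  have hj : (0:ℝ) ≤ j := by positivity
  obtain ⟨hd0, hd⟩ := dCoef_bound hγ1 (m + j)
  have hx : 1 / 2 ≤ α + γ + (m + j) + 1 := by linarith
  rw [show α + γ + (m + j) + β + m + 2 = (α + γ + (m + j) + 1) + (β + 1) + m by ring,
    show ((m + j : ℕ) : ℝ) + α - m + 1 = j + (α + 1) by push_cast; ring]
  set x := α + γ + (m + j) + 1
  have hr := gam_ratio hx (s := β + 1) (by linarith) (by linarith)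
  have hf := gam_fact (y := x + (β + 1)) (by linarith) m
  have hjj := gam_j (a := α + 1) (by linarith) (by linarith) j
  have g1 := Real.Gamma_pos_of_pos (s := x) (by linarith)
  have g2 := Real.Gamma_pos_of_pos (s := x + (β + 1)) (by linarith)
  have g3 := Real.Gamma_pos_of_pos (s := x + (β + 1) + m) (by linarith)
  have g4 := Real.Gamma_pos_of_pos (s := j + (α + 1)) (by linarith)
  refine ⟨by positivity, ?_⟩
  have hR : Real.Gamma x / Real.Gamma (x + (β + 1) + m) ≤ 8 / m.factorial := by
    rw [div_le_div_iff₀ g3 (by positivity)]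
    have : (0:ℝ) < m.factorial := by positivity
    nlinarith
  have hJ : 1 / Real.Gamma (j + (α + 1)) ≤ 2 * 2 ^ j / j.factorial := by
    rw [div_le_div_iff₀ g4 (by positivity)]
    linarith
  have hE : (6:ℝ) ^ m / m.factorial ≤ Real.exp 6 :=
    Real.pow_div_factorial_le_exp 6 (by norm_num) m
  calc _ = dCoef γ (m + j) * ((m + j).factorial : ℝ) / 2 ^ (m + j) *
        (Real.Gamma x / Real.Gamma (x + (β + 1) + m)) * (1 / Real.Gamma (j + (α + 1))) := by
        field_simp
    _ ≤ 6 * 12 ^ (m + j) / 2 ^ (m + j) * (8 / m.factorial) * (2 * 2 ^ j / j.factorial) := by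
        gcongr
    _ = 96 * (6 ^ m / m.factorial) * (12 ^ j / j.factorial) := by
        rw [mul_div_assoc, ← div_pow, show (12:ℝ) / 2 = 6 by norm_num,
          show (12:ℝ) = 6 * 2 by norm_num, mul_pow, pow_add]
        ring
    _ ≤ _ := by gcongr

theorem stmt14 (α β γ : ℝ) (hα : α ∈ Set.Ioo (-1 : ℝ) 0)
    (hβ : β ∈ Set.Icc (-(1 : ℝ) / 2) (1 / 2)) (hγ : γ ∈ Set.Icc (-(1 : ℝ) / 2) (1 / 2)) :
    ∃ C : ℝ, 0 < C ∧ ∀ m : ℕ, 1 ≤ m →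
      Summable (fun j : ℕ => dCoef γ (m + j) * ((m + j).factorial : ℝ) *
        Real.Gamma (α + γ + (m + j) + 1) /
        ((2 : ℝ) ^ (m + j) * Real.Gamma (α + γ + (m + j) + β + m + 2) *
          Real.Gamma (((m + j : ℕ) : ℝ) + α - m + 1))) ∧
      (∑' j : ℕ, dCoef γ (m + j) * ((m + j).factorial : ℝ) *
        Real.Gamma (α + γ + (m + j) + 1) /
        ((2 : ℝ) ^ (m + j) * Real.Gamma (α + γ + (m + j) + β + m + 2) *
          Real.Gamma (((m + j : ℕ) : ℝ) + α - m + 1))) ≤ C := by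
  have hS : Summable (fun j : ℕ => 96 * Real.exp 6 * ((12:ℝ) ^ j / j.factorial)) :=
    (Real.summable_pow_div_factorial 12).mul_left _
  have hpos : 0 < ∑' j : ℕ, 96 * Real.exp 6 * ((12:ℝ) ^ j / j.factorial) :=
    hS.tsum_pos (fun j => by positivity) 0 (by positivity)
  refine ⟨_, hpos, fun m hm => ?_⟩
  have hs := Summable.of_nonneg_of_le (fun j => (term_bound hα hβ hγ m hm j).1)
    (fun j => (term_bound hα hβ hγ m hm j).2) hS
  exact ⟨hs, hs.tsum_le_tsum (fun j => (term_bound hα hβ hγ m hm j).2) hS⟩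
end

section
/- Let β,γ > -1. There exists a constant C > 0 such that for all integers m ≥ 1: δ'_m(β,γ)·Γ(β+m+1) = √((β+γ+2m+1)·Γ(β+γ+m+1)·Γ(β+m+1)/(m!·Γ(γ+m+1))) ≤ C·m^{β+1/2}. -/
open Real MeasureTheory Set Filter

open Asymptotics


lemma gamma_prod_aux (s : ℝ) (hs : 0 < s) (n : ℕ) :
    Real.Gamma (s + n + 1) = Real.Gamma s * ∏ j ∈ Finset.range (n + 1), (s + j) := by
  induction n with
  | zero => simp [Real.Gamma_add_one hs.ne', mul_comm]
  | succ k ih =>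
    rw [Finset.prod_range_succ, ← mul_assoc, ← ih, Real.Gamma_add_one (by positivity)]
    push_cast
    rw [show s + (k + 1 : ℝ) = s + k + 1 by ring]
    ring

lemma gamma_ratio_aux (s : ℝ) (hs : -1 < s) :
    Tendsto (fun m : ℕ => Real.Gamma (s + m) / (m.factorial * (m : ℝ) ^ (s - 1)))
      atTop (nhds 1) := by
  have hs1 : 0 < s + 1 := by linarith
  have hG : 0 < Real.Gamma (s + 1) := Real.Gamma_pos_of_pos hs1
  have h1 : Tendsto (fun m : ℕ => Real.Gamma (s + 1) / Real.GammaSeq (s + 1) m) atTop (nhds 1) := by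
    have := (tendsto_const_nhds (x := Real.Gamma (s + 1))).div
      (Real.GammaSeq_tendsto_Gamma (s + 1)) hG.ne'
    rwa [div_self hG.ne'] at this
  have h0 : ∀ c : ℝ, Tendsto (fun m : ℕ => (1 + c / (m : ℝ))⁻¹) atTop (nhds 1) := by
    intro c
    have := ((tendsto_const_div_atTop_nhds_zero_nat c).const_add 1).inv₀ (by norm_num)
    simpa using this
  have h2 := (h1.mul (h0 s)).mul (h0 (s + 1))
  simp only [mul_one] at h2
  refine h2.congr' ?_
  filter_upwards [eventually_ge_atTop 1] with m hm
  have hm' : (1 : ℝ) ≤ m := by exact_mod_cast hm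
  have hm0 : (0 : ℝ) < m := by linarith
  have hsm : 0 < s + m := by linarith
  have hp := gamma_prod_aux (s + 1) hs1 m
  rw [show s + 1 + (m : ℝ) + 1 = (s + m + 1) + 1 by ring, Real.Gamma_add_one (by positivity),
    Real.Gamma_add_one hsm.ne'] at hp
  have hP : 0 < ∏ j ∈ Finset.range (m + 1), (s + 1 + (j : ℝ)) :=
    Finset.prod_pos fun j _ => by positivity
  have hf : (0 : ℝ) < m.factorial := by exact_mod_cast m.factorial_pos
  have hpow : (m : ℝ) ^ (s + 1) = (m : ℝ) ^ (s - 1) * m ^ 2 := by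
    rw [show s + 1 = (s - 1) + (2 : ℕ) by push_cast; ring, Real.rpow_add_natCast hm0.ne']
  have hq : 0 < (m : ℝ) ^ (s - 1) := Real.rpow_pos_of_pos hm0 _
  have e1 : 1 + s / (m : ℝ) = (s + m) / m := by field_simp; ring
  have e2 : 1 + (s + 1) / (m : ℝ) = (s + m + 1) / m := by field_simp; ring
  unfold Real.GammaSeq
  rw [e1, e2, hpow]
  have hsm1 : 0 < s + m + 1 := by linarith
  generalize (m : ℝ) ^ (s - 1) = q at *
  generalize ∏ j ∈ Finset.range (m + 1), (s + 1 + (j : ℝ)) = P at *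
  field_simp
  linarith

theorem stmt18 (β γ : ℝ) (hβ : -1 < β) (hγ : -1 < γ) :
    ∃ C : ℝ, 0 < C ∧ ∀ m : ℕ, 1 ≤ m →
      jacobiDelta β γ m * Real.Gamma (β + m + 1) =
        Real.sqrt ((β + γ + 2 * m + 1) * Real.Gamma (β + γ + m + 1) * Real.Gamma (β + m + 1) /
          (m.factorial * Real.Gamma (γ + m + 1))) ∧
      jacobiDelta β γ m * Real.Gamma (β + m + 1) ≤ C * (m : ℝ) ^ (β + 1 / 2) := by
  have hlim := ((((tendsto_const_div_atTop_nhds_zero_nat (β + γ + 1)).const_add 2).mul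
    (gamma_ratio_aux (β + γ + 1) (by linarith))).mul
    (gamma_ratio_aux (β + 1) (by linarith))).div
    (gamma_ratio_aux (γ + 1) (by linarith)) one_ne_zero
  obtain ⟨B, hB⟩ := hlim.bddAbove_range
  refine ⟨Real.sqrt B + 1, by positivity, fun m hm => ?_⟩
  have hBm := hB ⟨m, rfl⟩
  have hm' : (1 : ℝ) ≤ m := by exact_mod_cast hm
  have hm0 : (0 : ℝ) < m := by linarith
  have hf : (0 : ℝ) < m.factorial := by exact_mod_cast m.factorial_pos
  have g1 : 0 < Real.Gamma (β + γ + m + 1) := Real.Gamma_pos_of_pos (by linarith)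
  have g2 : 0 < Real.Gamma (β + m + 1) := Real.Gamma_pos_of_pos (by linarith)
  have g3 : 0 < Real.Gamma (γ + m + 1) := Real.Gamma_pos_of_pos (by linarith)
  have hEq : jacobiDelta β γ m * Real.Gamma (β + m + 1) =
        Real.sqrt ((β + γ + 2 * m + 1) * Real.Gamma (β + γ + m + 1) * Real.Gamma (β + m + 1) /
          (m.factorial * Real.Gamma (γ + m + 1))) := by
    unfold jacobiDelta
    conv_lhs => rw [← Real.sqrt_sq g2.le]
    rw [Real.sqrt_sq g2.le]
    nth_rewrite 2 [← Real.sqrt_sq g2.le]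
    rw [← Real.sqrt_mul' _ (by positivity)]
    congr 1
    field_simp
  refine ⟨hEq, ?_⟩
  rw [hEq]
  have hx : 0 < (m : ℝ) ^ (β + 1 / 2) := Real.rpow_pos_of_pos hm0 _
  have hkey : (β + γ + 2 * m + 1) * Real.Gamma (β + γ + m + 1) * Real.Gamma (β + m + 1) /
          (m.factorial * Real.Gamma (γ + m + 1)) ≤ B * ((m : ℝ) ^ (β + 1 / 2)) ^ 2 := by
    refine le_trans (le_of_eq ?_) (mul_le_mul_of_nonneg_right hBm (by positivity))
    simp only [Pi.div_apply]
    rw [show β + γ + 1 + (m : ℝ) = β + γ + m + 1 by ring,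
      show β + 1 + (m : ℝ) = β + m + 1 by ring, show γ + 1 + (m : ℝ) = γ + m + 1 by ring,
      show β + γ + 1 - 1 = β + γ by ring, show β + 1 - 1 = β by ring,
      show γ + 1 - 1 = γ by ring, Real.rpow_add hm0 β γ]
    have h2 : ((m : ℝ) ^ (β + 1 / 2)) ^ 2 = ((m : ℝ) ^ β) ^ 2 * m := by
      rw [Real.rpow_add hm0, mul_pow, ← Real.sqrt_eq_rpow, Real.sq_sqrt hm0.le]
    rw [h2]
    have q1 : 0 < (m : ℝ) ^ β := Real.rpow_pos_of_pos hm0 _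
    have q2 : 0 < (m : ℝ) ^ γ := Real.rpow_pos_of_pos hm0 _
    generalize (m : ℝ) ^ β = x at *
    generalize (m : ℝ) ^ γ = y at *
    field_simp
    ring
  calc _ ≤ Real.sqrt (B * ((m : ℝ) ^ (β + 1 / 2)) ^ 2) := Real.sqrt_le_sqrt hkey
    _ = Real.sqrt B * (m : ℝ) ^ (β + 1 / 2) := by
      rw [Real.sqrt_mul' _ (by positivity), Real.sqrt_sq hx.le]
    _ ≤ _ := by nlinarith
end
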